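/- Let g : {(x,y) : 0 < x < y < 1} → ℝ satisfy g(x,y) = g(1−y, (1−y)/(1−x)) for all 0 < x < y < 1, and let c be a real-valued G-invariant alternating function on pairwise distinct 5-tuples of points of S¹ such that c(z₁, z₂, z₃, z₄, z₅) = g(λ₁, λ₂) whenever (z₁, ..., z₅) is cyclically oriented and λ₁, λ₂ ∈ (0,1) are the real numbers equal to the cross ratios [z₂:z₃:z₁:z₄] and [z₂:z₃:z₁:z₅] respectively. Then for all 0 < x < y < z < 1, the alternating sum Σ_{j=0}^{5} (−1)^j · c(w₀, ..., ŵ_j, ..., w₅), where (w₀, ..., w₅) = (−i, 1, −1, 𝒞(x), 𝒞(y), 𝒞(z)) and ŵ_j means omitting the j-th entry, equals −g(x,y) + g(x,z) − g(y,z) + g(x/z, y/z) + g((z−1)/(x−1), (z−1)/(y−1)) − g(x(z−1)/(z(x−1)), y(z−1)/(z(y−1))). -/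

import Mathlib

open Complex

/-- The cross ratio `[z₁:z₂:z₃:z₄] = (z₁-z₃)(z₂-z₄)/((z₂-z₃)(z₁-z₄))`. -/
noncomputable def crossRatio (z₁ z₂ z₃ z₄ : ℂ) : ℂ :=
  ((z₁ - z₃) * (z₂ - z₄)) / ((z₂ - z₃) * (z₁ - z₄))

/-- A tuple `(z₁, …, z_k)` of points of `S¹` is *cyclically oriented* if it can be written as
`z_j = e^{iθ_j}` with `θ₁ < θ₂ < ⋯ < θ_k < θ₁ + 2π`. -/
def CyclicallyOriented {k : ℕ} (z : Fin k → ℂ) : Prop :=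
  ∃ θ : Fin k → ℝ, StrictMono θ ∧ (∀ i j : Fin k, θ j < θ i + 2 * Real.pi) ∧
    ∀ j, z j = Complex.exp (θ j * Complex.I)

/-- The Cayley transform `𝒞(z) = (z-i)/(z+i)`. -/
noncomputable def cayley (z : ℂ) : ℂ := (z - Complex.I) / (z + Complex.I)

/-- The Möbius transformation `z ↦ (az+b)/(b̄z+ā)` given by an element of `PU(1,1)`. -/
noncomputable def mobius (a b z : ℂ) : ℂ :=
  (a * z + b) / ((starRingEnd ℂ) b * z + (starRingEnd ℂ) a)

/-- A tuple of pairwise distinct points of the unit circle `S¹`. -/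
def OnCircleInj {k : ℕ} (z : Fin k → ℂ) : Prop :=
  (∀ j, ‖z j‖ = 1) ∧ Function.Injective z

/-- `c` is alternating on pairwise distinct tuples of points of `S¹`. -/
def IsAlternating {k : ℕ} (c : (Fin k → ℂ) → ℝ) : Prop :=
  ∀ (σ : Equiv.Perm (Fin k)) (z : Fin k → ℂ), OnCircleInj z →
    c (fun i => z (σ i)) = (Equiv.Perm.sign σ : ℤ) * c z

/-- `c` is invariant under the diagonal action of `G = PU(1,1)` on tuples of points of `S¹`. -/
def IsGInvariant {k : ℕ} (c : (Fin k → ℂ) → ℝ) : Prop :=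
  ∀ a b : ℂ, ‖a‖ ^ 2 - ‖b‖ ^ 2 = 1 →
    ∀ z : Fin k → ℂ, OnCircleInj z → c (fun i => mobius a b (z i)) = c z


/-!
On a cyclically oriented tuple the symmetry of `g` says exactly that the value of `c` may be read
off from the cross ratios `[z₁:z₂:z₅:z₃]`, `[z₁:z₂:z₅:z₄]` of the rotated tuple
`(z₅, z₁, z₂, z₃, z₄)` instead of `[z₂:z₃:z₁:z₄]`, `[z₂:z₃:z₁:z₅]`. The six points
`(-i, 1, -1, 𝒞(x), 𝒞(y), 𝒞(z))` are the Cayley transforms of `1, ∞, 0, x, y, z`, so all six faces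
are cyclically oriented, and their cross ratios are cross ratios of points of `ℝ ∪ {∞}`. The three
faces containing `-i, 1, -1` are computed from the original cross ratios, the other three from the
rotated ones.
-/

section CrossRatio

variable {z₁ z₂ z₃ z₄ z₅ : ℂ}

lemma crossRatio_ne_zero_iff :
    crossRatio z₁ z₂ z₃ z₄ ≠ 0 ↔ (z₁ ≠ z₃ ∧ z₂ ≠ z₄) ∧ z₂ ≠ z₃ ∧ z₁ ≠ z₄ := by
  simp only [crossRatio, div_ne_zero_iff, mul_ne_zero_iff, sub_ne_zero]

lemma crossRatio_rotate (h₁₃ : z₁ ≠ z₃) (h₂₄ : z₂ ≠ z₄) :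
    crossRatio z₂ z₃ z₁ z₄ = 1 - crossRatio z₁ z₂ z₄ z₃ := by
  have h₁₃' := sub_ne_zero.2 h₁₃
  have h₂₄' := sub_ne_zero.2 h₂₄
  unfold crossRatio
  field_simp
  ring

lemma crossRatio_div_crossRatio (h₁₅ : z₁ ≠ z₅) (h₂₅ : z₂ ≠ z₅) :
    crossRatio z₁ z₂ z₅ z₃ / crossRatio z₁ z₂ z₅ z₄ = crossRatio z₁ z₂ z₄ z₃ := by
  have h₁₅' := sub_ne_zero.2 h₁₅
  have h₂₅' := sub_ne_zero.2 h₂₅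
  unfold crossRatio
  field_simp

end CrossRatio

section Cayley

variable {a b c d : ℂ}

lemma ofReal_add_I_ne_zero (t : ℝ) : (t : ℂ) + I ≠ 0 :=
  fun h => by simpa using congrArg im h

lemma cayley_zero : cayley 0 = -1 := by
  simp [cayley]

lemma cayley_one : cayley 1 = -I := by
  have h : (1 : ℂ) + I ≠ 0 := by simpa using ofReal_add_I_ne_zero 1
  rw [cayley, div_eq_iff h]
  linear_combination I_mul_I

lemma cayley_sub_cayley (ha : a + I ≠ 0) (hb : b + I ≠ 0) :
    cayley a - cayley b = 2 * I * (a - b) / ((a + I) * (b + I)) := by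
  unfold cayley
  field_simp
  ring

lemma one_sub_cayley (ha : a + I ≠ 0) : 1 - cayley a = 2 * I / (a + I) := by
  unfold cayley
  field_simp
  ring

lemma crossRatio_cayley (ha : a + I ≠ 0) (hb : b + I ≠ 0) (hc : c + I ≠ 0) (hd : d + I ≠ 0) :
    crossRatio (cayley a) (cayley b) (cayley c) (cayley d) = crossRatio a b c d := by
  have hI := I_ne_zero
  simp only [crossRatio, cayley_sub_cayley, ha, hb, hc, hd, ne_eq, not_false_eq_true]
  field_simp

lemma crossRatio_one_cayley (hb : b + I ≠ 0) (hc : c + I ≠ 0) (hd : d + I ≠ 0) :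
    crossRatio 1 (cayley b) (cayley c) (cayley d) = (d - b) / (c - b) := by
  have hI := I_ne_zero
  rw [← neg_div_neg_eq, neg_sub, neg_sub]
  simp only [crossRatio, cayley_sub_cayley, one_sub_cayley, hb, hc, hd, ne_eq, not_false_eq_true]
  field_simp

lemma crossRatio_cayley_one (ha : a + I ≠ 0) (hc : c + I ≠ 0) (hd : d + I ≠ 0) :
    crossRatio (cayley a) 1 (cayley c) (cayley d) = (a - c) / (a - d) := by
  have hI := I_ne_zero
  simp only [crossRatio, cayley_sub_cayley, one_sub_cayley, ha, hc, hd, ne_eq, not_false_eq_true]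
  field_simp

lemma exp_two_mul_arctan_mul_I (t : ℝ) :
    exp ((2 * Real.arctan t : ℝ) * I) = (1 + t * I) / (1 - t * I) := by
  have hcos : (Real.cos (Real.arctan t) : ℂ) ≠ 0 := by
    exact_mod_cast (Real.cos_arctan_pos t).ne'
  have hsin : (Real.sin (Real.arctan t) : ℂ) = t * Real.cos (Real.arctan t) := by
    rw [← Real.tan_mul_cos (Real.cos_arctan_pos t).ne', Real.tan_arctan]
    push_cast
    rfl
  have hexp : exp (Real.arctan t * I) = Real.cos (Real.arctan t) * (1 + t * I) := by
    rw [exp_mul_I, ← ofReal_cos, ← ofReal_sin, hsin]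
    ring
  have hexp_neg : exp (-(Real.arctan t * I)) = Real.cos (Real.arctan t) * (1 - t * I) := by
    rw [← neg_mul, exp_mul_I, cos_neg, sin_neg, ← ofReal_cos, ← ofReal_sin, hsin]
    ring
  calc exp ((2 * Real.arctan t : ℝ) * I)
      = exp (Real.arctan t * I) / exp (-(Real.arctan t * I)) := by
        rw [← exp_sub]
        push_cast
        ring_nf
    _ = (1 + t * I) / (1 - t * I) := by
        rw [hexp, hexp_neg, mul_div_mul_left _ _ hcos]

lemma cayley_ofReal_eq_neg_exp (t : ℝ) :
    cayley t = -exp ((2 * Real.arctan t : ℝ) * I) := by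
  have hnum : (t : ℂ) - I = I * -(1 + t * I) := by linear_combination (t : ℂ) * I_mul_I
  have hden : (t : ℂ) + I = I * (1 - t * I) := by linear_combination (t : ℂ) * I_mul_I
  rw [exp_two_mul_arctan_mul_I, cayley, hnum, hden, mul_div_mul_left _ _ I_ne_zero, neg_div]

end Cayley

section Orientation

open Matrix

lemma CyclicallyOriented.comp_strictMono {k l : ℕ} {w : Fin k → ℂ} (hw : CyclicallyOriented w)
    {φ : Fin l → Fin k} (hφ : StrictMono φ) : CyclicallyOriented (w ∘ φ) := by
  obtain ⟨θ, hmono, hlt, hexp⟩ := hw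
  exact ⟨θ ∘ φ, hmono.comp hφ, fun i j => hlt (φ i) (φ j), fun j => hexp (φ j)⟩

lemma cyclicallyOriented_of_last_lt {n : ℕ} {w : Fin (n + 1) → ℂ} {θ : Fin (n + 1) → ℝ}
    (hθ : StrictMono θ) (hlast : θ (Fin.last n) < θ 0 + 2 * Real.pi)
    (hw : ∀ j, w j = exp (θ j * I)) : CyclicallyOriented w := by
  refine ⟨θ, hθ, fun i j => ?_, hw⟩
  have hfirst : θ 0 ≤ θ i := hθ.monotone (Fin.zero_le i)
  have hj : θ j ≤ θ (Fin.last n) := hθ.monotone (Fin.le_last j)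
  linarith

lemma cyclicallyOriented_cayley_one_cayley {n : ℕ} {p : ℝ} {t : Fin (n + 1) → ℝ}
    (ht : StrictMono t) (hp : t (Fin.last n) < p) :
    CyclicallyOriented (vecCons (cayley p) (vecCons 1 fun i => cayley (t i))) := by
  have hlast : Real.arctan (t (Fin.last n)) < Real.arctan p := Real.arctan_strictMono hp
  have hp_lt : Real.arctan p < Real.pi / 2 := Real.arctan_lt_pi_div_two p
  have ht₀ : -(Real.pi / 2) < Real.arctan (t 0) := Real.neg_pi_div_two_lt_arctan (t 0)
  -- The argument of `𝒞(p)` is lowered by `2π` so that it precedes the argument `0` of `1`.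
  refine cyclicallyOriented_of_last_lt
    (θ := vecCons (2 * Real.arctan p - Real.pi)
      (vecCons 0 fun i => 2 * Real.arctan (t i) + Real.pi))
    (strictMono_vecCons.2 ⟨?_, strictMono_vecCons.2 ⟨?_, fun i j hij => ?_⟩⟩) ?_
    (Fin.cases ?_ (Fin.cases ?_ fun i => ?_))
  · rw [cons_val_zero]
    linarith
  · linarith
  · have harctan : Real.arctan (t i) < Real.arctan (t j) := Real.arctan_strictMono (ht hij)
    linarith
  · change 2 * Real.arctan (t (Fin.last n)) + Real.pi < 2 * Real.arctan p - Real.pi + 2 * Real.pi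
    linarith
  · simp [cayley_ofReal_eq_neg_exp, sub_mul, exp_sub, div_neg]
  · simp
  · simp [cayley_ofReal_eq_neg_exp, add_mul, exp_add]

variable {p q x y z : ℝ}

lemma cyclicallyOriented_cayley_one_cayley₃ (hxy : x < y) (hyz : y < z) (hzp : z < p) :
    CyclicallyOriented ![cayley p, 1, cayley x, cayley y, cayley z] := by
  have ht : StrictMono ![x, y, z] := by simp [hxy, hyz]
  convert cyclicallyOriented_cayley_one_cayley ht hzp using 3
  funext i
  fin_cases i <;> rfl

lemma cyclicallyOriented_cayley_one_cayley₄ (hqx : q < x) (hxy : x < y) (hyz : y < z)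
    (hzp : z < p) :
    CyclicallyOriented ![cayley p, 1, cayley q, cayley x, cayley y, cayley z] := by
  have ht : StrictMono ![q, x, y, z] := by simp [hqx, hxy, hyz]
  convert cyclicallyOriented_cayley_one_cayley ht hzp using 3
  funext i
  fin_cases i <;> rfl

lemma cyclicallyOriented_one_cayley₄ (hqx : q < x) (hxy : x < y) (hyz : y < z) :
    CyclicallyOriented ![1, cayley q, cayley x, cayley y, cayley z] :=
  (cyclicallyOriented_cayley_one_cayley₄ hqx hxy hyz (lt_add_one z)).comp_strictMono
    Fin.strictMono_succ

lemma cyclicallyOriented_cayley₅ (hqx : q < x) (hxy : x < y) (hyz : y < z) (hzp : z < p) :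
    CyclicallyOriented ![cayley p, cayley q, cayley x, cayley y, cayley z] := by
  convert (cyclicallyOriented_cayley_one_cayley₄ hqx hxy hyz hzp).comp_strictMono
    (Fin.strictMono_succAbove 1)
  funext i
  fin_cases i <;> rfl

end Orientation

/-- The function `c` on 5-tuples is given by `g` in cross ratio coordinates: its value at a
cyclically oriented tuple `(z₁, …, z₅)` is `g ([z₂:z₃:z₁:z₄], [z₂:z₃:z₁:z₅])`. Only the values
of `g` on `0 < s < t < 1` are constrained. -/
def HasCrossRatioCoordinates (c : (Fin 5 → ℂ) → ℝ) (g : ℝ → ℝ → ℝ) : Prop :=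
  ∀ w : Fin 5 → ℂ, CyclicallyOriented w → ∀ s t : ℝ, 0 < s → s < t → t < 1 →
    crossRatio (w 1) (w 2) (w 0) (w 3) = s → crossRatio (w 1) (w 2) (w 0) (w 4) = t → c w = g s t

/-- The functional equation on `0 < s < t < 1` that expresses, in cross ratio coordinates, the
invariance of a function of five points under the rotation `(z₁, …, z₅) ↦ (z₅, z₁, …, z₄)`. -/
def IsRotationSymmetric (g : ℝ → ℝ → ℝ) : Prop :=
  ∀ s t : ℝ, 0 < s → s < t → t < 1 → g s t = g (1 - t) ((1 - t) / (1 - s))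

namespace HasCrossRatioCoordinates

variable {c : (Fin 5 → ℂ) → ℝ} {g : ℝ → ℝ → ℝ} {p q x y z : ℝ}

lemma apply_eq_of_rotated (hc : HasCrossRatioCoordinates c g) (hg : IsRotationSymmetric g)
    {w : Fin 5 → ℂ} (hw : CyclicallyOriented w) {s t : ℝ} (hs : 0 < s) (hst : s < t) (ht : t < 1)
    (hws : crossRatio (w 0) (w 1) (w 4) (w 2) = s) (hwt : crossRatio (w 0) (w 1) (w 4) (w 3) = t) :
    c w = g s t := by
  have ht₀ : 0 < t := hs.trans hst
  have hs' : crossRatio (w 0) (w 1) (w 4) (w 2) ≠ 0 := by rw [hws]; exact_mod_cast hs.ne'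
  have ht' : crossRatio (w 0) (w 1) (w 4) (w 3) ≠ 0 := by rw [hwt]; exact_mod_cast ht₀.ne'
  obtain ⟨⟨h₀₄, -⟩, h₁₄, h₀₂⟩ := crossRatio_ne_zero_iff.1 hs'
  obtain ⟨⟨-, h₁₃⟩, -, -⟩ := crossRatio_ne_zero_iff.1 ht'
  have hfirst : crossRatio (w 1) (w 2) (w 0) (w 3) = (1 - s / t : ℝ) := by
    rw [crossRatio_rotate h₀₂ h₁₃, ← crossRatio_div_crossRatio h₀₄ h₁₄, hws, hwt]
    norm_cast
  have hsecond : crossRatio (w 1) (w 2) (w 0) (w 4) = (1 - s : ℝ) := by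
    rw [crossRatio_rotate h₀₂ h₁₄, hws]
    norm_cast
  have hpos : 0 < 1 - s / t := sub_pos.2 ((div_lt_one ht₀).2 hst)
  have hlt : 1 - s / t < 1 - s :=
    sub_lt_sub_left ((lt_div_iff₀ ht₀).2 (mul_lt_of_lt_one_right hs ht)) 1
  have hlt_one : 1 - s < 1 := sub_lt_self 1 hs
  calc c w = g (1 - s / t) (1 - s) := hc w hw _ _ hpos hlt hlt_one hfirst hsecond
    _ = g (1 - (1 - s)) ((1 - (1 - s)) / (1 - (1 - s / t))) := hg _ _ hpos hlt hlt_one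
    _ = g s t := by rw [sub_sub_cancel, sub_sub_cancel, div_div_cancel₀ hs.ne']

lemma apply_cayley_one_cayley (hc : HasCrossRatioCoordinates c g)
    (hqx : q < x) (hxy : x < y) (hyp : y < p) :
    c ![cayley p, 1, cayley q, cayley x, cayley y] = g ((x - q) / (p - q)) ((y - q) / (p - q)) := by
  have hqp : 0 < p - q := by linarith
  have hcross (t : ℝ) :
      crossRatio 1 (cayley q) (cayley p) (cayley t) = ((t - q) / (p - q) : ℝ) := by
    exact_mod_cast crossRatio_one_cayley (ofReal_add_I_ne_zero q) (ofReal_add_I_ne_zero p)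
      (ofReal_add_I_ne_zero t)
  refine hc _ (cyclicallyOriented_cayley_one_cayley₃ hqx hxy hyp) _ _ ?_ ?_ ?_ (hcross x) (hcross y)
  · exact div_pos (sub_pos.2 hqx) hqp
  · gcongr
  · exact (div_lt_one hqp).2 (by linarith)

lemma apply_one_cayley (hc : HasCrossRatioCoordinates c g) (hg : IsRotationSymmetric g)
    (hqx : q < x) (hxy : x < y) (hyz : y < z) :
    c ![1, cayley q, cayley x, cayley y, cayley z] = g ((x - q) / (z - q)) ((y - q) / (z - q)) := by
  have hqz : 0 < z - q := by linarith
  have hcross (t : ℝ) :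
      crossRatio 1 (cayley q) (cayley z) (cayley t) = ((t - q) / (z - q) : ℝ) := by
    exact_mod_cast crossRatio_one_cayley (ofReal_add_I_ne_zero q) (ofReal_add_I_ne_zero z)
      (ofReal_add_I_ne_zero t)
  refine hc.apply_eq_of_rotated hg (cyclicallyOriented_one_cayley₄ hqx hxy hyz) ?_ ?_ ?_
    (hcross x) (hcross y)
  · exact div_pos (sub_pos.2 hqx) hqz
  · gcongr
  · exact (div_lt_one hqz).2 (by linarith)

lemma apply_cayley_one_cayley_rotated (hc : HasCrossRatioCoordinates c g)
    (hg : IsRotationSymmetric g) (hxy : x < y) (hyz : y < z) (hzp : z < p) :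
    c ![cayley p, 1, cayley x, cayley y, cayley z] = g ((p - z) / (p - x)) ((p - z) / (p - y)) := by
  have hpz : 0 < p - z := by linarith
  have hpy : 0 < p - y := by linarith
  have hpx : 0 < p - x := by linarith
  have hcross (t : ℝ) :
      crossRatio (cayley p) 1 (cayley z) (cayley t) = ((p - z) / (p - t) : ℝ) := by
    exact_mod_cast crossRatio_cayley_one (ofReal_add_I_ne_zero p) (ofReal_add_I_ne_zero z)
      (ofReal_add_I_ne_zero t)
  refine hc.apply_eq_of_rotated hg (cyclicallyOriented_cayley_one_cayley₃ hxy hyz hzp) ?_ ?_ ?_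
    (hcross x) (hcross y)
  · exact div_pos hpz hpx
  · gcongr
  · exact (div_lt_one hpy).2 (by linarith)

lemma apply_cayley (hc : HasCrossRatioCoordinates c g) (hg : IsRotationSymmetric g)
    (hqx : q < x) (hxy : x < y) (hyz : y < z) (hzp : z < p) :
    c ![cayley p, cayley q, cayley x, cayley y, cayley z] =
      g ((x - q) * (p - z) / ((z - q) * (p - x))) ((y - q) * (p - z) / ((z - q) * (p - y))) := by
  have hpz : 0 < p - z := by linarith
  have hpy : 0 < p - y := by linarith
  have hpx : 0 < p - x := by linarith
  have hxq : 0 < x - q := by linarith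
  have hyq : 0 < y - q := by linarith
  have hzq : 0 < z - q := by linarith
  have hcross (t : ℝ) :
      crossRatio (cayley p) (cayley q) (cayley z) (cayley t) =
        ((t - q) * (p - z) / ((z - q) * (p - t)) : ℝ) := by
    rw [crossRatio_cayley (ofReal_add_I_ne_zero p) (ofReal_add_I_ne_zero q)
      (ofReal_add_I_ne_zero z) (ofReal_add_I_ne_zero t), crossRatio, ← neg_sub (t : ℂ) q,
      ← neg_sub (z : ℂ) q, mul_neg, neg_mul, neg_div_neg_eq, mul_comm ((p : ℂ) - z)]
    norm_cast
  refine hc.apply_eq_of_rotated hg (cyclicallyOriented_cayley₅ hqx hxy hyz hzp) ?_ ?_ ?_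
    (hcross x) (hcross y)
  · exact div_pos (mul_pos hxq hpz) (mul_pos hzq hpx)
  · gcongr
  · rw [div_lt_one (mul_pos hzq hpy)]
    gcongr

end HasCrossRatioCoordinates

theorem tau4_formula_general {g : ℝ → ℝ → ℝ} (hg : IsRotationSymmetric g)
    {c : (Fin 5 → ℂ) → ℝ} (hc : HasCrossRatioCoordinates c g)
    {x y z : ℝ} (hx : 0 < x) (hxy : x < y) (hyz : y < z) (hz : z < 1) :
    c ![(1 : ℂ), -1, cayley x, cayley y, cayley z]
        - c ![-I, -1, cayley x, cayley y, cayley z]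
        + c ![-I, 1, cayley x, cayley y, cayley z]
        - c ![-I, 1, -1, cayley y, cayley z]
        + c ![-I, 1, -1, cayley x, cayley z]
        - c ![-I, 1, -1, cayley x, cayley y]
      = -g x y + g x z - g y z + g (x / z) (y / z)
          + g ((z - 1) / (x - 1)) ((z - 1) / (y - 1))
          - g (x * (z - 1) / (z * (x - 1))) (y * (z - 1) / (z * (y - 1))) := by
  have hy : 0 < y := hx.trans hxy
  have hxz : x < z := hxy.trans hyz
  have hflip (a b : ℝ) : (a - 1) / (b - 1) = (1 - a) / (1 - b) := by
    rw [← neg_div_neg_eq, neg_sub, neg_sub]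
  have hface {s t : ℝ} (hs : 0 < s) (hst : s < t) (ht : t < 1) :
      c ![-I, 1, -1, cayley s, cayley t] = g s t := by
    simpa [cayley_zero, cayley_one] using hc.apply_cayley_one_cayley hs hst ht
  have hface₀ := hc.apply_one_cayley hg hx hxy hyz
  have hface₁ := hc.apply_cayley hg hx hxy hyz hz
  have hface₂ := hc.apply_cayley_one_cayley_rotated hg hxy hyz hz
  simp only [ofReal_zero, ofReal_one, cayley_zero, cayley_one, sub_zero] at hface₀ hface₁ hface₂
  rw [hface hx hxy (hyz.trans hz), hface hx hxz hz, hface hy hyz hz, hface₀, hface₁, hface₂]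
  simp only [mul_div_mul_comm, hflip]
  ring

/-- **The reduced differential `τ⁴` in cross ratio coordinates.** If `c` is the `G`-invariant
alternating extension of `g`, then the homogeneous differential `δ⁴c` evaluated at
`(-i, 1, -1, 𝒞(x), 𝒞(y), 𝒞(z))` is the 6-term expression in `g`. -/
theorem tau4_formula (g : ℝ → ℝ → ℝ)
    (hg : ∀ x y : ℝ, 0 < x → x < y → y < 1 → g x y = g (1 - y) ((1 - y) / (1 - x)))
    (c : (Fin 5 → ℂ) → ℝ) (halt : IsAlternating c) (hinv : IsGInvariant c)
    (hres : ∀ w : Fin 5 → ℂ, CyclicallyOriented w →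
      ∀ lam₁ lam₂ : ℝ, lam₁ ∈ Set.Ioo (0:ℝ) 1 → lam₂ ∈ Set.Ioo (0:ℝ) 1 →
      crossRatio (w 1) (w 2) (w 0) (w 3) = (lam₁ : ℂ) →
      crossRatio (w 1) (w 2) (w 0) (w 4) = (lam₂ : ℂ) → c w = g lam₁ lam₂)
    (x y z : ℝ) (hx : 0 < x) (hxy : x < y) (hyz : y < z) (hz : z < 1) :
    c ![(1 : ℂ), -1, cayley (x : ℂ), cayley (y : ℂ), cayley (z : ℂ)]
        - c ![-Complex.I, -1, cayley (x : ℂ), cayley (y : ℂ), cayley (z : ℂ)]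
        + c ![-Complex.I, 1, cayley (x : ℂ), cayley (y : ℂ), cayley (z : ℂ)]
        - c ![-Complex.I, 1, -1, cayley (y : ℂ), cayley (z : ℂ)]
        + c ![-Complex.I, 1, -1, cayley (x : ℂ), cayley (z : ℂ)]
        - c ![-Complex.I, 1, -1, cayley (x : ℂ), cayley (y : ℂ)]
      = -g x y + g x z - g y z + g (x / z) (y / z)
          + g ((z - 1) / (x - 1)) ((z - 1) / (y - 1))
          - g (x * (z - 1) / (z * (x - 1))) (y * (z - 1) / (z * (y - 1))) := by
  exact tau4_formula_general hg
    (fun w hw s t hs hst ht => hres w hw s t ⟨hs, hst.trans ht⟩ ⟨hs.trans hst, ht⟩) hx hxy hyz hz
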